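/- Let d ≥ 1 and let R be a reduced crystallographic root system spanning ℝ^d, with Weyl group W(R) ⊆ O(d) and rotation subgroup W(R)⁺ = ker(det). Then in the formal power series ring ℤ⟦t⟧ one has the identity ∑_{n≥0} dim( H_n(ℝ^d)^{W(R)⁺} ) tⁿ = (1 − t²)·(1 + t^{|R|/2})·P_R(t), where P_R(t) = ∑_{n≥0} dim( Pol_n(ℝ^d)^{W(R)} ) tⁿ and |R| is the number of roots. -/

import Mathlib

open MvPolynomial

noncomputable section

/-- The action of an (invertible) matrix `g` on polynomial functions on `ℝ^ι`, given by
`(g · P)(x) = P (g⁻¹ x)`; concretely, substitute `X i ↦ ∑ j (g⁻¹) i j • X j`. -/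
def matrixAct {ι : Type} [Fintype ι] [DecidableEq ι] (g : Matrix ι ι ℝ) :
    MvPolynomial ι ℝ →ₗ[ℝ] MvPolynomial ι ℝ :=
  (aeval (R := ℝ) fun i => ∑ j, C (g⁻¹ i j) * X j).toLinearMap

/-- The standard Laplace operator `Δ = ∑ i ∂²/∂x_i²` on polynomials. -/
def laplacian {ι : Type} [Fintype ι] [DecidableEq ι] :
    MvPolynomial ι ℝ →ₗ[ℝ] MvPolynomial ι ℝ :=
  ∑ i, (pderiv i).toLinearMap ∘ₗ (pderiv i).toLinearMap

/-- `Pol_n(ℝ^ι)^Γ`: the `Γ`-invariant homogeneous polynomials of degree `n`. -/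
def polInv {ι : Type} [Fintype ι] [DecidableEq ι] (Γ : Set (Matrix ι ι ℝ)) (n : ℕ) :
    Submodule ℝ (MvPolynomial ι ℝ) :=
  homogeneousSubmodule ι ℝ n ⊓ ⨅ g ∈ Γ, LinearMap.eqLocus (matrixAct g) LinearMap.id

/-- `H_n(ℝ^ι)^Γ`: the `Γ`-invariant harmonic homogeneous polynomials of degree `n`. -/
def harmInv {ι : Type} [Fintype ι] [DecidableEq ι] (Γ : Set (Matrix ι ι ℝ)) (n : ℕ) :
    Submodule ℝ (MvPolynomial ι ℝ) :=
  homogeneousSubmodule ι ℝ n ⊓ LinearMap.ker laplacian ⊓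
    ⨅ g ∈ Γ, LinearMap.eqLocus (matrixAct g) LinearMap.id

/-- The standard Euclidean inner product on `ℝ^d`. -/
def dotP {d : ℕ} (x y : Fin d → ℝ) : ℝ := ∑ i, x i * y i

/-- The orthogonal rootReflection `s_α` in the hyperplane orthogonal to `α`. -/
def rootReflection {d : ℕ} (α x : Fin d → ℝ) : Fin d → ℝ :=
  x - (2 * dotP x α / dotP α α) • α

/-- The Weyl group `W(R)`: the subgroup generated by the reflections `s_α`, `α ∈ R`. -/
def weylGroup {d : ℕ} (R : Finset (Fin d → ℝ)) : Subgroup (Matrix (Fin d) (Fin d) ℝ)ˣ :=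
  Subgroup.closure
    {g | ∃ α ∈ R, ∀ x : Fin d → ℝ, (↑g : Matrix (Fin d) (Fin d) ℝ).mulVec x = rootReflection α x}

/-- `W(R)`, as a set of matrices. -/
def weylSet {d : ℕ} (R : Finset (Fin d → ℝ)) : Set (Matrix (Fin d) (Fin d) ℝ) :=
  {m | ∃ g ∈ weylGroup R, m = (↑g : Matrix (Fin d) (Fin d) ℝ)}

/-- `W(R)⁺ = ker (det)`, the rotation subgroup, as a set of matrices. -/
def weylPlusSet {d : ℕ} (R : Finset (Fin d → ℝ)) : Set (Matrix (Fin d) (Fin d) ℝ) :=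
  {m | ∃ g ∈ weylGroup R,
    (↑g : Matrix (Fin d) (Fin d) ℝ).det = 1 ∧ m = (↑g : Matrix (Fin d) (Fin d) ℝ)}

section HarmAux

variable {ι : Type} [Fintype ι] [DecidableEq ι]

def actA (g : Matrix ι ι ℝ) : MvPolynomial ι ℝ →ₐ[ℝ] MvPolynomial ι ℝ :=
  aeval (R := ℝ) fun i => ∑ j, C (g⁻¹ i j) * X j

theorem matrixAct_eq (g : Matrix ι ι ℝ) (P : MvPolynomial ι ℝ) : matrixAct g P = actA g P := rfl

theorem actA_X (g : Matrix ι ι ℝ) (i : ι) : actA g (X i) = ∑ j, C (g⁻¹ i j) * X j := by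
  simp [actA]

theorem actA_mul (g h : Matrix ι ι ℝ) (P : MvPolynomial ι ℝ) :
    actA (g * h) P = actA g (actA h P) := by
  suffices actA (g * h) = (actA g).comp (actA h) by rw [this]; rfl
  apply MvPolynomial.algHom_ext
  intro i
  simp only [AlgHom.comp_apply, actA_X, map_sum, map_mul, algHom_C, Matrix.mul_inv_rev,
    Matrix.mul_apply, Finset.sum_mul, Finset.mul_sum, algebraMap_eq]
  rw [Finset.sum_comm]
  simp only [mul_assoc]

theorem actA_one (P : MvPolynomial ι ℝ) : actA (1 : Matrix ι ι ℝ) P = P := by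
  suffices actA (1 : Matrix ι ι ℝ) = AlgHom.id ℝ _ by rw [this]; rfl
  apply MvPolynomial.algHom_ext
  intro i
  simp [actA_X, Matrix.one_apply]

theorem actA_homog (g : Matrix ι ι ℝ) {P : MvPolynomial ι ℝ} {n : ℕ} (h : P.IsHomogeneous n) :
    (actA g P).IsHomogeneous n := by
  have := h.aeval (n := 1) (fun i => ∑ j, C (g⁻¹ i j) * X j) (fun i =>
    IsHomogeneous.sum _ _ _ fun j _ => isHomogeneous_C_mul_X _ _)
  rw [one_mul] at this
  exact this

theorem mem_polInv {Γ : Set (Matrix ι ι ℝ)} {n : ℕ} {P : MvPolynomial ι ℝ} :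
    P ∈ polInv Γ n ↔ P.IsHomogeneous n ∧ ∀ g ∈ Γ, actA g P = P := by
  simp [polInv, mem_homogeneousSubmodule, LinearMap.mem_eqLocus, matrixAct_eq]

theorem harmInv_eq {Γ : Set (Matrix ι ι ℝ)} {n : ℕ} :
    harmInv Γ n = polInv Γ n ⊓ LinearMap.ker laplacian := by
  simp only [harmInv, polInv]
  rw [inf_right_comm]

theorem pderiv_actA (g : Matrix ι ι ℝ) (i : ι) (P : MvPolynomial ι ℝ) :
    pderiv i (actA g P) = ∑ j, C (g⁻¹ j i) * actA g (pderiv j P) := by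
  induction P using MvPolynomial.induction_on with
  | C a => simp [actA]
  | add p q hp hq => simp [hp, hq, mul_add, Finset.sum_add_distrib]
  | mul_X p k hp =>
    simp only [map_mul, pderiv_mul, hp, map_add, mul_add, Finset.sum_add_distrib]
    congr 1
    · rw [Finset.sum_mul]; simp only [mul_assoc]
    · simp [actA_X, Pi.single_apply, mul_comm]

theorem laplacian_apply (P : MvPolynomial ι ℝ) :
    laplacian P = ∑ i, pderiv i (pderiv i P) := by
  simp [laplacian]

theorem laplacian_actA (g : Matrix ι ι ℝ) (hg : g⁻¹ * (g⁻¹).transpose = 1)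
    (P : MvPolynomial ι ℝ) : laplacian (actA g P) = actA g (laplacian P) := by
  simp only [laplacian_apply, pderiv_actA, map_sum, pderiv_C_mul, Finset.mul_sum]
  rw [Finset.sum_comm]
  refine Finset.sum_congr rfl fun j _ => ?_
  rw [Finset.sum_comm]
  have : ∀ k, ∑ i, C (g⁻¹ j i) * (C (g⁻¹ k i) * actA g (pderiv k (pderiv j P))) =
      C ((1 : Matrix ι ι ℝ) j k) * actA g (pderiv k (pderiv j P)) := by
    intro k
    rw [← hg, Matrix.mul_apply, map_sum, Finset.sum_mul]
    simp [mul_assoc]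
  simp [this, Matrix.one_apply]

def rsq : MvPolynomial ι ℝ := ∑ i, X i * X i

theorem actA_rsq (g : Matrix ι ι ℝ) (hg : (g⁻¹).transpose * g⁻¹ = 1) :
    actA g (rsq : MvPolynomial ι ℝ) = rsq := by
  simp only [rsq, map_sum, map_mul, actA_X, Finset.sum_mul, Finset.mul_sum]
  rw [Finset.sum_comm]
  refine Finset.sum_congr rfl fun j _ => ?_
  rw [Finset.sum_comm]
  have : ∀ k, ∑ i, (C (g⁻¹ i k) * X k : MvPolynomial ι ℝ) * (C (g⁻¹ i j) * X j) =
      C ((1 : Matrix ι ι ℝ) k j) * (X k * X j) := by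
    intro k
    rw [← hg, Matrix.mul_apply, map_sum, Finset.sum_mul]
    refine Finset.sum_congr rfl fun i _ => ?_
    simp; ring
  simp [this, Matrix.one_apply]

theorem rsq_homog : (rsq : MvPolynomial ι ℝ).IsHomogeneous 2 :=
  IsHomogeneous.sum _ _ _ fun i _ => (isHomogeneous_X ℝ i).mul (isHomogeneous_X ℝ i)

def wt (m : ι →₀ ℕ) : ℝ := ∏ i, ((m i).factorial : ℝ)

theorem wt_pos (m : ι →₀ ℕ) : 0 < wt m :=
  Finset.prod_pos fun i _ => by exact_mod_cast Nat.factorial_pos _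

theorem wt_add (m : ι →₀ ℕ) (i : ι) : wt (Finsupp.single i 1 + m) = wt m * (m i + 1) := by
  unfold wt
  rw [← Finset.mul_prod_erase _ _ (Finset.mem_univ i),
    ← Finset.mul_prod_erase (a := i) _ (fun i => ((m i).factorial : ℝ)) (Finset.mem_univ i)]
  have : ∏ x ∈ Finset.univ.erase i, (((Finsupp.single i 1 + m : ι →₀ ℕ) x).factorial : ℝ) =
      ∏ x ∈ Finset.univ.erase i, ((m x).factorial : ℝ) := by
    refine Finset.prod_congr rfl fun x hx => ?_
    have : i ≠ x := (Finset.ne_of_mem_erase hx).symm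
    simp [Finsupp.single_apply, this]
  rw [this]
  simp [add_comm 1 (m i), Nat.factorial_succ]
  ring

def fis (P Q : MvPolynomial ι ℝ) : ℝ := ∑ m ∈ P.support, wt m * coeff m P * coeff m Q

theorem fis_comm (P Q : MvPolynomial ι ℝ) : fis P Q = fis Q P := by
  have h : ∀ P Q : MvPolynomial ι ℝ, fis P Q =
      ∑ m ∈ P.support ∪ Q.support, wt m * coeff m P * coeff m Q := by
    intro P Q
    refine Finset.sum_subset Finset.subset_union_left fun m _ hm => ?_
    simp [notMem_support_iff.mp hm]
  rw [h, h, Finset.union_comm]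
  exact Finset.sum_congr rfl fun m _ => by ring

theorem fis_sum_right {κ : Type} (s : Finset κ) (P : MvPolynomial ι ℝ)
    (Q : κ → MvPolynomial ι ℝ) : fis P (∑ k ∈ s, Q k) = ∑ k ∈ s, fis P (Q k) := by
  simp only [fis, coeff_sum, Finset.mul_sum]
  rw [Finset.sum_comm]

theorem fis_X_mul (i : ι) (P Q : MvPolynomial ι ℝ) : fis (X i * P) Q = fis P (pderiv i Q) := by
  unfold fis
  rw [support_X_mul, Finset.sum_map]
  refine Finset.sum_congr rfl fun m _ => ?_
  rw [coeff_pderiv]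
  simp only [addLeftEmbedding_apply, coeff_X_mul, wt_add]
  rw [add_comm (Finsupp.single i 1) m]
  ring

theorem fis_self {P : MvPolynomial ι ℝ} (h : fis P P = 0) : P = 0 := by
  ext m
  unfold fis at h
  rw [Finset.sum_eq_zero_iff_of_nonneg] at h
  · by_cases hm : m ∈ P.support
    · have := h m hm
      have h2 := (wt_pos m).ne'
      simpa [h2] using this
    · simpa using hm
  · intro m _
    have := (wt_pos m).le
    rw [mul_assoc]
    exact mul_nonneg this (mul_self_nonneg _)

theorem fis_laplacian (P Q : MvPolynomial ι ℝ) : fis P (laplacian Q) = fis (rsq * P) Q := by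
  rw [laplacian_apply, fis_sum_right, rsq, Finset.sum_mul, fis_comm _ Q, fis_sum_right]
  refine Finset.sum_congr rfl fun i _ => ?_
  rw [← fis_X_mul, ← fis_X_mul, fis_comm, mul_assoc]

theorem laplacian_rsq_inj [Nonempty ι] {P : MvPolynomial ι ℝ} (h : laplacian (rsq * P) = 0) :
    P = 0 := by
  have h1 : fis (rsq * P) (rsq * P) = 0 := by
    rw [← fis_laplacian, h]; simp [fis]
  have h2 := fis_self h1
  have h3 : (rsq : MvPolynomial ι ℝ) ≠ 0 := by
    intro h0
    have := congrArg (eval fun _ => (1 : ℝ)) h0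
    simp [rsq] at this
  exact (mul_eq_zero.mp h2).resolve_left h3

instance polInv_fin (Γ : Set (Matrix ι ι ℝ)) (n : ℕ) : FiniteDimensional ℝ (polInv Γ n) := by
  have : FiniteDimensional ℝ (homogeneousSubmodule ι ℝ n) :=
    Module.Finite.iff_fg.mpr (homogeneousSubmodule_fg ι ℝ n)
  exact Submodule.finiteDimensional_of_le (inf_le_left : polInv Γ n ≤ homogeneousSubmodule ι ℝ n)

theorem laplacian_homog {P : MvPolynomial ι ℝ} {n : ℕ} (h : P.IsHomogeneous n) :
    (laplacian P).IsHomogeneous (n - 2) := by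
  rw [laplacian_apply]
  refine IsHomogeneous.sum _ _ _ fun i _ => ?_
  have := h.pderiv (i := i) |>.pderiv (i := i)
  rwa [Nat.sub_sub] at this

theorem finrank_harm_small (Γ : Set (Matrix ι ι ℝ)) (n : ℕ) (hn : n < 2) :
    Module.finrank ℝ (harmInv Γ n) = Module.finrank ℝ (polInv Γ n) := by
  rw [harmInv_eq, inf_eq_left.mpr]
  intro P hP
  rw [mem_polInv] at hP
  rw [LinearMap.mem_ker, laplacian_apply]
  refine Finset.sum_eq_zero fun i _ => ?_
  have h1 : (pderiv i P).IsHomogeneous 0 := by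
    have := hP.1.pderiv (i := i)
    rwa [show n - 1 = 0 by omega] at this
  rw [← mem_homogeneousSubmodule, homogeneousSubmodule_zero] at h1
  obtain ⟨c, hc⟩ := Submodule.mem_one.mp h1
  rw [← hc, algebraMap_eq, pderiv_C]

theorem finrank_harm [Nonempty ι] (Γ : Set (Matrix ι ι ℝ))
    (hΓ : ∀ g ∈ Γ, g⁻¹ * (g⁻¹).transpose = 1) (m : ℕ) :
    Module.finrank ℝ (polInv Γ (m + 2)) =
      Module.finrank ℝ (harmInv Γ (m + 2)) + Module.finrank ℝ (polInv Γ m) := by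
  have hmul : ∀ P ∈ polInv Γ m, rsq * P ∈ polInv Γ (m + 2) := by
    intro P hP
    rw [mem_polInv] at hP ⊢
    refine ⟨by rw [add_comm]; exact rsq_homog.mul hP.1, fun g hg => ?_⟩
    rw [map_mul, actA_rsq g (mul_eq_one_comm.mp (hΓ g hg)), hP.2 g hg]
  have hlap : ∀ P ∈ polInv Γ (m + 2), laplacian P ∈ polInv Γ m := by
    intro P hP
    rw [mem_polInv] at hP ⊢
    refine ⟨laplacian_homog hP.1, fun g hg => ?_⟩
    rw [← laplacian_actA g (hΓ g hg), hP.2 g hg]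
  let L : polInv Γ (m + 2) →ₗ[ℝ] polInv Γ m := laplacian.restrict hlap
  let T : polInv Γ m →ₗ[ℝ] polInv Γ (m + 2) := (LinearMap.mulLeft ℝ rsq).restrict hmul
  have hinj : Function.Injective (L ∘ₗ T) := by
    rw [injective_iff_map_eq_zero]
    intro P hP
    have : laplacian (rsq * (P : MvPolynomial ι ℝ)) = 0 := congrArg Subtype.val hP
    exact Subtype.ext (laplacian_rsq_inj this)
  have hsurj : Function.Surjective L := by
    have := LinearMap.injective_iff_surjective.mp hinj
    rw [LinearMap.coe_comp] at this
    exact this.of_comp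
  have h1 := LinearMap.finrank_range_add_finrank_ker L
  rw [LinearMap.range_eq_top.mpr hsurj, finrank_top] at h1
  have h2 : (LinearMap.ker L).map (polInv Γ (m + 2)).subtype = harmInv Γ (m + 2) := by
    rw [harmInv_eq]
    ext P
    simp only [Submodule.mem_map, LinearMap.mem_ker, Submodule.mem_inf, Submodule.subtype_apply]
    constructor
    · rintro ⟨Q, hQ, rfl⟩
      exact ⟨Q.2, congrArg Subtype.val hQ⟩
    · rintro ⟨hP, hl⟩
      exact ⟨⟨P, hP⟩, Subtype.ext hl, rfl⟩
  have h3 := Submodule.finrank_map_subtype_eq (polInv Γ (m + 2)) (LinearMap.ker L)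
  rw [h2] at h3
  omega

end HarmAux
section RootAux

set_option linter.unusedSectionVars false

variable {d : ℕ}

theorem dotP_pos {α : Fin d → ℝ} (h : α ≠ 0) : 0 < dotP α α := by
  unfold dotP
  obtain ⟨i, hi⟩ := Function.ne_iff.mp h
  exact Finset.sum_pos' (fun i _ => mul_self_nonneg _)
    ⟨i, Finset.mem_univ _, mul_self_pos.mpr hi⟩

def rS (α : Fin d → ℝ) : Matrix (Fin d) (Fin d) ℝ :=
  1 - Matrix.vecMulVec ((2 / dotP α α) • α) α

theorem rS_apply (α : Fin d → ℝ) (i j : Fin d) :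
    rS α i j = (1 : Matrix (Fin d) (Fin d) ℝ) i j - 2 / dotP α α * α i * α j := by
  simp [rS, Matrix.vecMulVec_apply, mul_assoc]

theorem rS_mulVec (α x : Fin d → ℝ) : (rS α).mulVec x = rootReflection α x := by
  ext i
  simp only [rS, rootReflection, Matrix.sub_mulVec, Matrix.one_mulVec, Matrix.vecMulVec_mulVec,
    Pi.sub_apply, Pi.smul_apply, smul_eq_mul, dotP, dotProduct, MulOpposite.smul_eq_mul_unop,
    MulOpposite.unop_op]
  simp only [mul_comm (α _) (x _)]
  ring

theorem rS_transpose (α : Fin d → ℝ) : (rS α).transpose = rS α := by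
  ext i j
  rw [Matrix.transpose_apply, rS_apply, rS_apply, Matrix.one_apply, Matrix.one_apply]
  simp only [eq_comm (a := i)]
  ring

theorem refl_self {α : Fin d → ℝ} (h : α ≠ 0) : rootReflection α α = -α := by
  have := (dotP_pos h).ne'
  ext i
  simp [rootReflection]
  field_simp
  ring

theorem dotP_refl (α x : Fin d → ℝ) (h : α ≠ 0) : dotP (rootReflection α x) α = - dotP x α := by
  have h0 := (dotP_pos h).ne'
  have : dotP (rootReflection α x) α = dotP x α - 2 * dotP x α / dotP α α * dotP α α := by
    unfold rootReflection
    generalize 2 * dotP x α / dotP α α = c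
    simp only [dotP, Pi.sub_apply, Pi.smul_apply, smul_eq_mul, sub_mul, Finset.sum_sub_distrib,
      mul_assoc, Finset.mul_sum]
  rw [this]
  field_simp
  ring

theorem refl_refl {α : Fin d → ℝ} (h : α ≠ 0) (x : Fin d → ℝ) :
    rootReflection α (rootReflection α x) = x := by
  have h1 : rootReflection α (rootReflection α x) =
    rootReflection α x - (2 * dotP (rootReflection α x) α / dotP α α) • α := rfl
  rw [h1, dotP_refl α x h]
  ext i
  simp [rootReflection]
  ring

theorem mat_ext {A B : Matrix (Fin d) (Fin d) ℝ} (h : ∀ x, A.mulVec x = B.mulVec x) : A = B :=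
  Matrix.toLin'.injective (LinearMap.ext fun x => by simpa using h x)

theorem rS_mul_self {α : Fin d → ℝ} (h : α ≠ 0) : rS α * rS α = 1 := by
  apply mat_ext
  intro x
  rw [← Matrix.mulVec_mulVec, rS_mulVec, rS_mulVec, refl_refl h, Matrix.one_mulVec]

theorem rS_inv {α : Fin d → ℝ} (h : α ≠ 0) : (rS α)⁻¹ = rS α :=
  Matrix.inv_eq_left_inv (rS_mul_self h)

theorem rS_det {α : Fin d → ℝ} (h : α ≠ 0) : (rS α).det = -1 := by
  have h0 := (dotP_pos h).ne'
  have : rS α = 1 + Matrix.replicateCol Unit (-((2 / dotP α α) • α)) *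
      Matrix.replicateRow Unit α := by
    ext i j
    simp [rS_apply, Matrix.mul_apply]
    ring
  rw [this, Matrix.det_one_add_replicateCol_mul_replicateRow]
  have h2 : α ⬝ᵥ (-((2 / dotP α α) • α)) = -(2 / dotP α α * dotP α α) := by
    generalize 2 / dotP α α = c
    simp only [dotProduct_neg, dotProduct_smul, smul_eq_mul]
    rfl
  rw [h2]
  field_simp
  norm_num

def rU (α : Fin d → ℝ) (h : α ≠ 0) : (Matrix (Fin d) (Fin d) ℝ)ˣ :=
  ⟨rS α, rS α, rS_mul_self h, rS_mul_self h⟩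

theorem rU_mem {R : Finset (Fin d → ℝ)} {α : Fin d → ℝ} (h : α ≠ 0) (hα : α ∈ R) :
    rU α h ∈ weylGroup R :=
  Subgroup.subset_closure ⟨α, hα, fun x => rS_mulVec α x⟩

theorem weyl_orth {R : Finset (Fin d → ℝ)} (hz : (0 : Fin d → ℝ) ∉ R)
    {g : (Matrix (Fin d) (Fin d) ℝ)ˣ} (hg : g ∈ weylGroup R) :
    (g : Matrix (Fin d) (Fin d) ℝ).transpose * (g : Matrix (Fin d) (Fin d) ℝ) = 1 := by
  induction hg using Subgroup.closure_induction with
  | mem g hg =>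
    obtain ⟨α, hα, h⟩ := hg
    have h0 : α ≠ 0 := fun h => hz (h ▸ hα)
    have : (g : Matrix (Fin d) (Fin d) ℝ) = rS α := mat_ext fun x => by rw [h, rS_mulVec]
    rw [this, rS_transpose, rS_mul_self h0]
  | one => simp
  | mul x y _ _ hx hy =>
    rw [Units.val_mul, Matrix.transpose_mul, Matrix.mul_assoc, ← Matrix.mul_assoc _ x.val, hx,
      Matrix.one_mul, hy]
  | inv x _ hx =>
    have : ((x⁻¹ : (Matrix (Fin d) (Fin d) ℝ)ˣ) : Matrix (Fin d) (Fin d) ℝ) =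
        (x : Matrix (Fin d) (Fin d) ℝ).transpose := by
      rw [Matrix.coe_units_inv]
      exact Matrix.inv_eq_left_inv hx
    rw [this, Matrix.transpose_transpose]
    exact mul_eq_one_comm.mp hx

theorem weyl_char {R : Finset (Fin d → ℝ)} (hz : (0 : Fin d → ℝ) ∉ R)
    (χ : (Matrix (Fin d) (Fin d) ℝ)ˣ →* ℝˣ) (P : MvPolynomial (Fin d) ℝ)
    (hP : ∀ α (h : α ≠ 0), α ∈ R → actA (rS α) P = (χ (rU α h) : ℝ) • P)
    {g : (Matrix (Fin d) (Fin d) ℝ)ˣ} (hg : g ∈ weylGroup R) :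
    actA (g : Matrix (Fin d) (Fin d) ℝ) P = (χ g : ℝ) • P := by
  induction hg using Subgroup.closure_induction with
  | mem g hg =>
    obtain ⟨α, hα, h⟩ := hg
    have h0 : α ≠ 0 := fun h => hz (h ▸ hα)
    have : g = rU α h0 := Units.ext (mat_ext fun x => by rw [h, rU, rS_mulVec])
    rw [this]
    exact hP α h0 hα
  | one => simp [actA_one]
  | mul x y _ _ hx hy =>
    rw [Units.val_mul, actA_mul, hy, map_smul, hx, map_mul, Units.val_mul, smul_smul, mul_comm]
  | inv x _ hx =>
    have h1 := congrArg (actA ((x⁻¹ : (Matrix (Fin d) (Fin d) ℝ)ˣ) : Matrix (Fin d) (Fin d) ℝ)) hx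
    rw [← actA_mul, Units.inv_mul, actA_one, map_smul] at h1
    rw [map_inv, h1, smul_smul, Units.inv_mul, one_smul, ← h1]

theorem mem_polInv_weyl {R : Finset (Fin d → ℝ)} (hz : (0 : Fin d → ℝ) ∉ R) {n : ℕ}
    {P : MvPolynomial (Fin d) ℝ} :
    P ∈ polInv (weylSet R) n ↔ P.IsHomogeneous n ∧ ∀ α ∈ R, actA (rS α) P = P := by
  rw [mem_polInv]
  refine and_congr_right fun _ => ⟨fun h α hα => ?_, fun h g hg => ?_⟩
  · have h0 : α ≠ 0 := fun h => hz (h ▸ hα)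
    exact h _ ⟨rU α h0, rU_mem h0 hα, rfl⟩
  · obtain ⟨g, hg, rfl⟩ := hg
    simpa using weyl_char hz 1 P (fun α _ hα => by simpa using h α hα) hg

theorem mem_polInv_plus {R : Finset (Fin d → ℝ)} (hz : (0 : Fin d → ℝ) ∉ R) {n : ℕ}
    {P : MvPolynomial (Fin d) ℝ} (hP : P.IsHomogeneous n)
    (h : ∀ α ∈ R, actA (rS α) P = -P) : P ∈ polInv (weylPlusSet R) n := by
  rw [mem_polInv]
  refine ⟨hP, ?_⟩
  rintro _ ⟨g, hg, hdet, rfl⟩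
  have := weyl_char hz (Units.map (Matrix.detMonoidHom : Matrix (Fin d) (Fin d) ℝ →* ℝ)) P
    (fun α h0 hα => by rw [h α hα]; simp [rU, rS_det h0]) hg
  simpa [hdet] using this

def lf (v : Fin d → ℝ) : MvPolynomial (Fin d) ℝ := ∑ i, C (v i) * X i

theorem lf_homog (v : Fin d → ℝ) : (lf v).IsHomogeneous 1 :=
  IsHomogeneous.sum _ _ _ fun _ _ => isHomogeneous_C_mul_X _ _

theorem lf_coeff (v : Fin d → ℝ) (i : Fin d) : coeff (Finsupp.single i 1) (lf v) = v i := by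
  simp [lf, coeff_sum, coeff_C_mul, coeff_X, Finsupp.single_left_inj]

theorem lf_neg (v : Fin d → ℝ) : lf (-v) = - lf v := by
  simp [lf]

theorem lf_ne {v : Fin d → ℝ} (h : v ≠ 0) : lf v ≠ 0 := by
  intro h0
  apply h
  ext i
  rw [← lf_coeff v, h0]; simp

theorem lf_prime {v : Fin d → ℝ} (h : v ≠ 0) : Prime (lf v) := by
  refine Irreducible.prime (irreducible_of_totalDegree_eq_one ((lf_homog v).totalDegree (lf_ne h)) ?_)
  intro x hx
  rw [isUnit_iff_ne_zero]
  rintro rfl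
  apply h
  ext i
  rw [← lf_coeff v]
  exact zero_dvd_iff.mp (hx _)

theorem lf_dvd {v w : Fin d → ℝ} (hw : w ≠ 0) (h : lf v ∣ lf w) : ∃ c : ℝ, w = c • v := by
  obtain ⟨q, hq⟩ := h
  have hne := lf_ne hw
  rw [hq] at hne
  have h1 := left_ne_zero_of_mul hne
  have h2 := right_ne_zero_of_mul hne
  have h3 := totalDegree_mul_of_isDomain h1 h2
  rw [← hq, (lf_homog w).totalDegree (lf_ne hw), (lf_homog v).totalDegree h1] at h3
  have h4 : q = C (coeff 0 q) := totalDegree_eq_zero_iff_eq_C.mp (by omega)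
  refine ⟨coeff 0 q, ?_⟩
  ext i
  rw [← lf_coeff w, hq, h4, mul_comm, coeff_C_mul, lf_coeff]
  simp

theorem act_X {α : Fin d → ℝ} (h : α ≠ 0) (i : Fin d) :
    actA (rS α) (X i) = X i - C (2 / dotP α α * α i) * lf α := by
  rw [actA_X, rS_inv h]
  simp only [rS_apply, C_sub, sub_mul, Finset.sum_sub_distrib, lf, Finset.mul_sum]
  congr 1
  · simp [Matrix.one_apply]
  · exact Finset.sum_congr rfl fun j _ => by rw [C_mul, mul_assoc]

theorem act_lf {α : Fin d → ℝ} (h : α ≠ 0) (v : Fin d → ℝ) :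
    actA (rS α) (lf v) = lf (rootReflection α v) := by
  have h1 : lf (rootReflection α v) = lf v - C (2 * dotP v α / dotP α α) * lf α := by
    simp only [lf, rootReflection, Pi.sub_apply, Pi.smul_apply, smul_eq_mul, C_sub, C_mul, sub_mul,
      Finset.sum_sub_distrib, Finset.mul_sum, mul_assoc]
  rw [h1]
  conv_lhs => rw [lf]
  simp only [map_sum, map_mul, act_X h, algHom_C, algebraMap_eq, mul_sub, Finset.sum_sub_distrib]
  congr 1
  simp only [← mul_assoc]
  rw [← Finset.sum_mul]
  congr 1
  simp only [← C_mul]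
  rw [← map_sum]
  congr 1
  generalize dotP α α = c
  rw [dotP, Finset.mul_sum, Finset.sum_div]
  exact Finset.sum_congr rfl fun i _ => by ring

theorem lf_dvd_sub {α : Fin d → ℝ} (h : α ≠ 0) (P : MvPolynomial (Fin d) ℝ) :
    lf α ∣ P - actA (rS α) P := by
  induction P using MvPolynomial.induction_on with
  | C a => simp
  | add p q hp hq =>
    have := dvd_add hp hq
    rw [map_add]
    convert this using 1
    ring
  | mul_X p k hp =>
    rw [map_mul, act_X h]
    have : p * X k - actA (rS α) p * (X k - C (2 / dotP α α * α k) * lf α) =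
      (p - actA (rS α) p) * X k + lf α * (actA (rS α) p * C (2 / dotP α α * α k)) := by ring
    rw [this]
    exact dvd_add (hp.mul_right _) (dvd_mul_right _ _)

theorem lf_dvd_anti {α : Fin d → ℝ} (h : α ≠ 0) {P : MvPolynomial (Fin d) ℝ}
    (hP : actA (rS α) P = -P) : lf α ∣ P := by
  have := lf_dvd_sub h P
  rw [hP] at this
  have h2 : P = C (1 / 2) * (P - -P) := by
    rw [sub_neg_eq_add, ← two_mul, ← mul_assoc, show (2 : MvPolynomial (Fin d) ℝ) = C 2 from rfl,
      ← C_mul]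
    norm_num
  rw [h2]
  exact this.mul_left _

theorem exists_pos_sys (R : Finset (Fin d → ℝ)) (hz : (0 : Fin d → ℝ) ∉ R) :
    ∃ S : Finset (Fin d → ℝ), S ⊆ R ∧ (∀ α ∈ R, -α ∈ R → α ∈ S ∨ -α ∈ S) ∧
      ∀ α ∈ S, -α ∉ S := by
  classical
  refine ⟨R.filter fun v => (0 : Lex (Fin d → ℝ)) < toLex v, Finset.filter_subset _ _, ?_, ?_⟩
  · intro α hα hn
    simp only [Finset.mem_filter, hα, hn, true_and, toLex_neg, Left.neg_pos_iff]
    rcases lt_trichotomy (0 : Lex (Fin d → ℝ)) (toLex α) with h | h | h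
    · exact Or.inl h
    · exact absurd hα (by rw [show α = 0 from (toLex.injective h).symm]; exact hz)
    · exact Or.inr h
  · intro α hα hn
    simp only [Finset.mem_filter, toLex_neg, Left.neg_pos_iff] at hα hn
    exact lt_asymm hα.2 hn.2

theorem homog_of_mul {D Q : MvPolynomial (Fin d) ℝ} {N n : ℕ} (hD : D.IsHomogeneous N) (hD0 : D ≠ 0)
    (h : (D * Q).IsHomogeneous n) (hQ : Q ≠ 0) : N ≤ n ∧ Q.IsHomogeneous (n - N) := by
  have key : ∀ k, homogeneousComponent (N + k) (D * Q) = D * homogeneousComponent k Q := by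
    intro k
    conv_lhs => rw [← sum_homogeneousComponent Q]
    rw [Finset.mul_sum, map_sum]
    have : ∀ i, homogeneousComponent (N + k) (D * homogeneousComponent i Q) =
        if i = k then D * homogeneousComponent i Q else 0 := by
      intro i
      rw [homogeneousComponent_of_mem (n := N + i)
        (hD.mul (homogeneousComponent_isHomogeneous i Q))]
      simp [eq_comm]
    simp only [this, Finset.sum_ite_eq', Finset.mem_range]
    split_ifs with hk
    · rfl
    · rw [homogeneousComponent_eq_zero _ _ (by omega), mul_zero]
  have hz : ∀ k, N + k ≠ n → homogeneousComponent k Q = 0 := by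
    intro k hk
    have := key k
    rw [homogeneousComponent_of_mem (n := n) h, if_neg hk] at this
    exact (mul_eq_zero.mp this.symm).resolve_left hD0
  by_cases hn : N ≤ n
  · refine ⟨hn, ?_⟩
    have h1 := sum_homogeneousComponent Q
    have h2 : Q = homogeneousComponent (n - N) Q := by
      conv_lhs => rw [← h1]
      refine (Finset.sum_eq_single (n - N) (fun b _ hb => hz b (by omega)) fun hb => ?_)
      exact homogeneousComponent_eq_zero _ _ (by rw [Finset.mem_range] at hb; omega)
    rw [h2]
    exact homogeneousComponent_isHomogeneous _ _
  · exfalso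
    apply hQ
    rw [← sum_homogeneousComponent Q]
    exact Finset.sum_eq_zero fun k _ => hz k (by omega)

end RootAux
section MainAux

variable {d : ℕ}

theorem neg_mem_of_red {R : Finset (Fin d → ℝ)}
    (hred : ∀ α ∈ R, {β | β ∈ R ∧ ∃ t : ℝ, β = t • α} = ({α, -α} : Set (Fin d → ℝ)))
    {α : Fin d → ℝ} (h : α ∈ R) : -α ∈ R := by
  have : -α ∈ ({α, -α} : Set (Fin d → ℝ)) := by simp
  rw [← hred α h] at this
  exact this.1

theorem not_dvd_of_pos {R S : Finset (Fin d → ℝ)} (hz : (0 : Fin d → ℝ) ∉ R)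
    (hred : ∀ α ∈ R, {β | β ∈ R ∧ ∃ t : ℝ, β = t • α} = ({α, -α} : Set (Fin d → ℝ)))
    (hSR : S ⊆ R) (hS2 : ∀ α ∈ S, -α ∉ S) {α β : Fin d → ℝ} (hα : α ∈ S) (hβ : β ∈ S)
    (hne : α ≠ β) : ¬ lf α ∣ lf β := by
  intro h
  have h0 : β ≠ 0 := fun h => hz (h ▸ hSR hβ)
  have h1 : β ∈ {β | β ∈ R ∧ ∃ t : ℝ, β = t • α} := ⟨hSR hβ, lf_dvd h0 h⟩
  rw [hred α (hSR hα)] at h1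
  rcases h1 with h1 | h1
  · exact hne h1.symm
  · rw [Set.mem_singleton_iff] at h1
    exact hS2 α hα (h1 ▸ hβ)

theorem R_eq {R S : Finset (Fin d → ℝ)}
    (hred : ∀ α ∈ R, {β | β ∈ R ∧ ∃ t : ℝ, β = t • α} = ({α, -α} : Set (Fin d → ℝ)))
    (hSR : S ⊆ R) (hS1 : ∀ α ∈ R, -α ∈ R → α ∈ S ∨ -α ∈ S) (hS2 : ∀ α ∈ S, -α ∉ S) :
    R = S ∪ S.image (fun x => -x) ∧ Disjoint S (S.image (fun x => -x)) := by
  constructor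
  · ext α
    simp only [Finset.mem_union, Finset.mem_image]
    constructor
    · intro h
      rcases hS1 α h (neg_mem_of_red hred h) with h | h
      · exact Or.inl h
      · exact Or.inr ⟨-α, h, neg_neg α⟩
    · rintro (h | ⟨β, h, rfl⟩)
      · exact hSR h
      · exact neg_mem_of_red hred (hSR h)
  · rw [Finset.disjoint_left]
    intro α h h2
    obtain ⟨β, hβ, rfl⟩ := Finset.mem_image.mp h2
    exact hS2 β hβ h

theorem act_delta {R S : Finset (Fin d → ℝ)} (hz : (0 : Fin d → ℝ) ∉ R)
    (hrefl : ∀ α ∈ R, ∀ β ∈ R, rootReflection α β ∈ R)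
    (hred : ∀ α ∈ R, {β | β ∈ R ∧ ∃ t : ℝ, β = t • α} = ({α, -α} : Set (Fin d → ℝ)))
    (hSR : S ⊆ R) (hS1 : ∀ α ∈ R, -α ∈ R → α ∈ S ∨ -α ∈ S) (hS2 : ∀ α ∈ S, -α ∉ S)
    (β : Fin d → ℝ) (hβ : β ∈ R) :
    actA (rS β) (∏ α ∈ S, lf α) = -∏ α ∈ S, lf α := by
  have hb0 : β ≠ 0 := fun h => hz (h ▸ hβ)
  obtain ⟨hR, hdis⟩ := R_eq hred hSR hS1 hS2
  set D := ∏ α ∈ S, lf α with hD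
  have hprod : ∏ α ∈ R, lf α = (-1) ^ S.card * (D * D) := by
    rw [hR, Finset.prod_union hdis, Finset.prod_image (fun x _ y _ h => neg_injective h)]
    simp only [lf_neg]
    rw [Finset.prod_neg, ← hD]
    ring
  have hinv : actA (rS β) (∏ α ∈ R, lf α) = ∏ α ∈ R, lf α := by
    rw [map_prod]
    refine Finset.prod_bij' (fun α _ => rootReflection β α) (fun α _ => rootReflection β α)
      (fun α hα => hrefl β hβ α hα) (fun α hα => hrefl β hβ α hα)
      (fun α _ => refl_refl hb0 α) (fun α _ => refl_refl hb0 α) (fun α _ => act_lf hb0 α)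
  have hD0 : D ≠ 0 := Finset.prod_ne_zero_iff.mpr fun α hα => lf_ne fun h => hz (h ▸ hSR hα)
  have hsq : actA (rS β) D * actA (rS β) D = D * D := by
    rw [hprod, map_mul, map_mul, map_pow, map_neg, map_one] at hinv
    exact mul_left_cancel₀ (pow_ne_zero _ (by norm_num)) hinv
  rcases mul_self_eq_mul_self_iff.mp hsq with h | h
  swap
  · exact h
  exfalso
  obtain ⟨γ, hγ, hγβ⟩ : ∃ γ ∈ S, γ = β ∨ γ = -β := by
    rcases hS1 β hβ (neg_mem_of_red hred hβ) with h | h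
    · exact ⟨β, h, Or.inl rfl⟩
    · exact ⟨-β, h, Or.inr rfl⟩
  have hg0 : γ ≠ 0 := fun h => hz (h ▸ hSR hγ)
  have hact : actA (rS β) (lf γ) = - lf γ := by
    have h1 : actA (rS β) (lf β) = - lf β := by rw [act_lf hb0, refl_self hb0, lf_neg]
    rcases hγβ with rfl | rfl
    · exact h1
    · rw [lf_neg, map_neg, h1]
  have hfac : D = lf γ * ∏ α ∈ S.erase γ, lf α := (Finset.mul_prod_erase S lf hγ).symm
  have hanti : actA (rS β) (∏ α ∈ S.erase γ, lf α) = -∏ α ∈ S.erase γ, lf α := by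
    rw [hfac, map_mul, hact] at h
    apply mul_left_cancel₀ (lf_ne hg0)
    linear_combination -h
  have hdvd : lf γ ∣ ∏ α ∈ S.erase γ, lf α := by
    have := lf_dvd_anti hb0 hanti
    rcases hγβ with rfl | rfl
    · exact this
    · rw [lf_neg]; exact neg_dvd.mpr this
  obtain ⟨α, hα, hd⟩ := (lf_prime hg0).exists_mem_finset_dvd hdvd
  exact not_dvd_of_pos hz hred hSR hS2 hγ (Finset.mem_of_mem_erase hα)
    (Finset.ne_of_mem_erase hα).symm hd

theorem delta_dvd {R S : Finset (Fin d → ℝ)} (hz : (0 : Fin d → ℝ) ∉ R)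
    (hred : ∀ α ∈ R, {β | β ∈ R ∧ ∃ t : ℝ, β = t • α} = ({α, -α} : Set (Fin d → ℝ)))
    (hSR : S ⊆ R) (hS2 : ∀ α ∈ S, -α ∉ S) {P : MvPolynomial (Fin d) ℝ}
    (hP : ∀ α ∈ R, actA (rS α) P = -P) : ∏ α ∈ S, lf α ∣ P := by
  refine Finset.prod_dvd_of_isRelPrime ?_ ?_
  · intro α hα β hβ hne
    have h0 : α ≠ 0 := fun h => hz (h ▸ hSR hα)
    exact (lf_prime h0).irreducible.isRelPrime_iff_not_dvd.mpr
      (not_dvd_of_pos hz hred hSR hS2 hα hβ hne)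
  · intro α hα
    exact lf_dvd_anti (fun h => hz (h ▸ hSR hα)) (hP α (hSR hα))

theorem plus_decomp {R : Finset (Fin d → ℝ)} (hz : (0 : Fin d → ℝ) ∉ R) (hne : R.Nonempty)
    {n : ℕ} {P : MvPolynomial (Fin d) ℝ} (hP : P ∈ polInv (weylPlusSet R) n) :
    ∃ A B : MvPolynomial (Fin d) ℝ, P = A + B ∧ A ∈ polInv (weylSet R) n ∧ B.IsHomogeneous n ∧
      ∀ α ∈ R, actA (rS α) B = -B := by
  obtain ⟨β, hβ⟩ := hne
  have nz : ∀ α ∈ R, α ≠ 0 := fun α hα h => hz (h ▸ hα)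
  rw [mem_polInv] at hP
  obtain ⟨hh, hP⟩ := hP
  have hinv : ∀ α ∈ R, ∀ Q : MvPolynomial (Fin d) ℝ, actA (rS α) (actA (rS α) Q) = Q := by
    intro α hα Q
    rw [← actA_mul, rS_mul_self (nz α hα), actA_one]
  have hsame : ∀ α ∈ R, actA (rS α) P = actA (rS β) P := by
    intro α hα
    have h1 := hP (rS α * rS β) ⟨rU α (nz α hα) * rU β (nz β hβ),
      mul_mem (rU_mem _ hα) (rU_mem _ hβ), by
        rw [Units.val_mul, Matrix.det_mul]
        simp [rU, rS_det (nz α hα), rS_det (nz β hβ)], rfl⟩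
    rw [actA_mul] at h1
    rw [← hinv α hα (actA (rS β) P), h1]
  have hsame2 : ∀ α ∈ R, actA (rS α) (actA (rS β) P) = P := by
    intro α hα
    rw [← hsame α hα, hinv α hα]
  have hQ := actA_homog (rS β) hh
  refine ⟨(1 / 2 : ℝ) • (P + actA (rS β) P), (1 / 2 : ℝ) • (P - actA (rS β) P), ?_, ?_, ?_, ?_⟩
  · module
  · rw [mem_polInv_weyl hz]
    refine ⟨(homogeneousSubmodule _ ℝ n).smul_mem _ (hh.add hQ), fun α hα => ?_⟩
    rw [map_smul, map_add, hsame2 α hα, hsame α hα, add_comm]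
  · exact (homogeneousSubmodule _ ℝ n).smul_mem _ (hh.sub hQ)
  · intro α hα
    rw [map_smul, map_sub, hsame2 α hα, hsame α hα]
    module

theorem finrank_plus {R : Finset (Fin d → ℝ)} (hz : (0 : Fin d → ℝ) ∉ R) (hne : R.Nonempty)
    (hrefl : ∀ α ∈ R, ∀ β ∈ R, rootReflection α β ∈ R)
    (hred : ∀ α ∈ R, {β | β ∈ R ∧ ∃ t : ℝ, β = t • α} = ({α, -α} : Set (Fin d → ℝ))) (n : ℕ) :
    Module.finrank ℝ (polInv (weylPlusSet R) n) = Module.finrank ℝ (polInv (weylSet R) n) +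
      if R.card / 2 ≤ n then Module.finrank ℝ (polInv (weylSet R) (n - R.card / 2)) else 0 := by
  obtain ⟨S, hSR, hS1, hS2⟩ := exists_pos_sys R hz
  have hcard : R.card / 2 = S.card := by
    obtain ⟨hR, hdis⟩ := R_eq hred hSR hS1 hS2
    rw [hR, Finset.card_union_of_disjoint hdis, Finset.card_image_of_injective _ neg_injective]
    omega
  rw [hcard]
  have hact := act_delta hz hrefl hred hSR hS1 hS2
  set D := ∏ α ∈ S, lf α with hD
  have hD0 : D ≠ 0 := Finset.prod_ne_zero_iff.mpr fun α hα => lf_ne fun h => hz (h ▸ hSR hα)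
  have hDh : D.IsHomogeneous S.card := by
    have := IsHomogeneous.prod S lf (fun _ => 1) (fun α _ => lf_homog α)
    simpa using this
  have hle : polInv (weylSet R) n ≤ polInv (weylPlusSet R) n := by
    intro P hP
    rw [mem_polInv] at hP ⊢
    refine ⟨hP.1, ?_⟩
    rintro _ ⟨g, hg, _, rfl⟩
    exact hP.2 _ ⟨g, hg, rfl⟩
  have hquot : ∀ B : MvPolynomial (Fin d) ℝ, B.IsHomogeneous n → (∀ α ∈ R, actA (rS α) B = -B) →
      B ≠ 0 → S.card ≤ n ∧ ∃ Q ∈ polInv (weylSet R) (n - S.card), B = D * Q := by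
    intro B hB hanti hB0
    obtain ⟨Q, rfl⟩ := delta_dvd hz hred hSR hS2 hanti
    obtain ⟨h1, h2⟩ := homog_of_mul hDh hD0 hB (right_ne_zero_of_mul hB0)
    refine ⟨h1, Q, ?_, rfl⟩
    rw [mem_polInv_weyl hz]
    refine ⟨h2, fun α hα => ?_⟩
    have := hanti α hα
    rw [map_mul, hact α hα] at this
    apply mul_left_cancel₀ hD0
    linear_combination -this
  split_ifs with hn
  · have hinj : Function.Injective (LinearMap.mulLeft ℝ D) := fun x y h => mul_left_cancel₀ hD0 h
    have hV : ∀ B ∈ (polInv (weylSet R) (n - S.card)).map (LinearMap.mulLeft ℝ D),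
        B.IsHomogeneous n ∧ ∀ α ∈ R, actA (rS α) B = -B := by
      rintro _ ⟨Q, hQ, rfl⟩
      obtain ⟨h1, h2⟩ := (mem_polInv_weyl hz).mp hQ
      refine ⟨?_, fun α hα => ?_⟩
      · have := hDh.mul h1
        rwa [Nat.add_sub_cancel' hn] at this
      · simp [map_mul, hact α hα, h2 α hα]
    have hsup : polInv (weylPlusSet R) n = polInv (weylSet R) n ⊔
        (polInv (weylSet R) (n - S.card)).map (LinearMap.mulLeft ℝ D) := by
      apply le_antisymm
      · intro P hP
        obtain ⟨A, B, rfl, hA, hB, hanti⟩ := plus_decomp hz hne hP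
        refine Submodule.add_mem_sup hA ?_
        by_cases hB0 : B = 0
        · rw [hB0]; exact zero_mem _
        obtain ⟨_, Q, hQ, rfl⟩ := hquot B hB hanti hB0
        exact ⟨Q, hQ, rfl⟩
      · refine sup_le hle fun B hB => ?_
        exact mem_polInv_plus hz (hV B hB).1 (hV B hB).2
    have hinf : polInv (weylSet R) n ⊓
        (polInv (weylSet R) (n - S.card)).map (LinearMap.mulLeft ℝ D) = ⊥ := by
      rw [eq_bot_iff]
      rintro B ⟨h1, h2⟩
      obtain ⟨β, hβ⟩ := hne
      have h3 := ((mem_polInv_weyl hz).mp h1).2 β hβ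
      rw [(hV B h2).2 β hβ] at h3
      exact self_eq_neg.mp h3.symm
    have := Submodule.finrank_sup_add_finrank_inf_eq (polInv (weylSet R) n)
      ((polInv (weylSet R) (n - S.card)).map (LinearMap.mulLeft ℝ D))
    rw [hinf, finrank_bot, ← hsup, add_zero] at this
    rw [this, ← (Submodule.equivMapOfInjective _ hinj (polInv (weylSet R) (n - S.card))).finrank_eq]
  · rw [add_zero]
    suffices h : polInv (weylPlusSet R) n = polInv (weylSet R) n by rw [h]
    refine le_antisymm (fun P hP => ?_) hle
    obtain ⟨A, B, rfl, hA, hB, hanti⟩ := plus_decomp hz hne hP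
    by_cases hB0 : B = 0
    · rwa [hB0, add_zero]
    · exact absurd (hquot B hB hanti hB0).1 hn

end MainAux

/-- For a reduced crystallographic root system `R` spanning `ℝ^d`, the generating series of the
dimensions of the `W(R)⁺`-invariant harmonic polynomials is
`(1 - t²) (1 + t^{|R|/2}) P_R(t)` where `P_R` is the generating series of the dimensions of the
`W(R)`-invariant polynomials. -/
theorem statement0 {d : ℕ} (hd : 1 ≤ d) (R : Finset (Fin d → ℝ))
    (hzero : (0 : Fin d → ℝ) ∉ R)
    (hspan : Submodule.span ℝ (R : Set (Fin d → ℝ)) = ⊤)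
    (hcrys : ∀ α ∈ R, ∀ β ∈ R, ∃ k : ℤ, 2 * dotP β α / dotP α α = (k : ℝ))
    (hrefl : ∀ α ∈ R, ∀ β ∈ R, rootReflection α β ∈ R)
    (hred : ∀ α ∈ R, {β | β ∈ R ∧ ∃ t : ℝ, β = t • α} = ({α, -α} : Set (Fin d → ℝ))) :
    (PowerSeries.mk fun n => (Module.finrank ℝ ↥(harmInv (weylPlusSet R) n) : ℤ)) =
      (1 - PowerSeries.X ^ 2) * (1 + PowerSeries.X ^ (R.card / 2)) *
        PowerSeries.mk fun n => (Module.finrank ℝ ↥(polInv (weylSet R) n) : ℤ) := by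
  have hne : R.Nonempty := by
    rw [Finset.nonempty_iff_ne_empty]
    rintro rfl
    have : Nontrivial (Fin d → ℝ) := by
      have : Nonempty (Fin d) := ⟨⟨0, hd⟩⟩
      infer_instance
    rw [Finset.coe_empty, Submodule.span_empty] at hspan
    exact bot_ne_top hspan
  have hnon : Nonempty (Fin d) := ⟨⟨0, hd⟩⟩
  have hplus := finrank_plus hzero hne hrefl hred
  have horth : ∀ g ∈ weylPlusSet R, g⁻¹ * (g⁻¹).transpose = 1 := by
    rintro _ ⟨g, hg, _, rfl⟩
    have h := weyl_orth hzero hg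
    rw [Matrix.inv_eq_left_inv h, Matrix.transpose_transpose]
    exact h
  have e1 : (PowerSeries.mk fun n => (Module.finrank ℝ ↥(harmInv (weylPlusSet R) n) : ℤ)) =
      (1 - PowerSeries.X ^ 2) *
        PowerSeries.mk fun n => (Module.finrank ℝ ↥(polInv (weylPlusSet R) n) : ℤ) := by
    ext n
    rw [sub_mul, one_mul, map_sub, PowerSeries.coeff_X_pow_mul']
    simp only [PowerSeries.coeff_mk]
    split_ifs with h
    · obtain ⟨m, rfl⟩ := Nat.exists_eq_add_of_le' h
      rw [Nat.add_sub_cancel, finrank_harm _ horth m]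
      push_cast
      ring
    · rw [finrank_harm_small _ _ (by omega), sub_zero]
  have e2 : (PowerSeries.mk fun n => (Module.finrank ℝ ↥(polInv (weylPlusSet R) n) : ℤ)) =
      (1 + PowerSeries.X ^ (R.card / 2)) *
        PowerSeries.mk fun n => (Module.finrank ℝ ↥(polInv (weylSet R) n) : ℤ) := by
    ext n
    rw [add_mul, one_mul, map_add, PowerSeries.coeff_X_pow_mul']
    simp only [PowerSeries.coeff_mk]
    rw [hplus n]
    push_cast
    rfl
  rw [e1, e2, mul_assoc]
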